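/- Let f ∈ ℱ, let M be a model of T_{0,f}, let n < ω, let a_0, …, a_n ∈ P^M, and let k* be minimal such that f(k*) > n. Then the following are equivalent: (i) there exist a model N of T_{0,f}, an embedding ι : M → N, and an element b ∈ Q^N such that R^N(b, ι(a_i)) holds for all i ≤ n; (ii) for every j < k* and every η ∈ 𝒯_{f,j} there exists ℓ ≤ f(j) such that no a_i (i ≤ n) lies in P^M_{η⌢⟨ℓ⟩}. -/

import Mathlib

/-- `η ∈ 𝒯_f` : a finite sequence with `η(ℓ) ≤ f(ℓ)` for all `ℓ < lg(η)`. -/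
def inT (f : ℕ → ℕ) (η : List ℕ) : Prop := ∀ i : Fin η.length, η.get i ≤ f i

/-- `𝒯_{f,k}` : elements of `𝒯_f` of length exactly `k`. -/
def Tk (f : ℕ → ℕ) (k : ℕ) : Set (List ℕ) := {η | η.length = k ∧ inT f η}

/-- `𝒯_{f,[k]}` : elements of `𝒯_f` of length at most `k`. -/
def Tle (f : ℕ → ℕ) (k : ℕ) : Set (List ℕ) := {η | η.length ≤ k ∧ inT f η}

/-- `𝒯_f = ⋃_k 𝒯_{f,k}`. -/
def Tf (f : ℕ → ℕ) : Set (List ℕ) := {η | inT f η}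

/-- The conditions on `s ⊆ 𝒯_{f,[k]}` prior to maximality: nonempty, closed
under initial segment, every `⊴`-maximal node is in `𝒯_{f,k}`, and `s`
contains no full splitting `{ρ⌢⟨ℓ⟩ : ℓ ≤ f(lg ρ)}`. -/
def SBase (f : ℕ → ℕ) (k : ℕ) (s : Set (List ℕ)) : Prop :=
  s ⊆ Tle f k ∧ s.Nonempty ∧
  (∀ η ∈ s, ∀ ρ : List ℕ, ρ <+: η → ρ ∈ s) ∧
  (∀ ρ ∈ s, (∀ η ∈ s, ρ <+: η → η = ρ) → ρ.length = k) ∧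
  (∀ ρ ∈ Tle f k, ¬ ∀ ℓ ≤ f ρ.length, ρ ++ [ℓ] ∈ s)

/-- `𝒮_{f,k}` : the `k`-maximal subsets of `𝒯_{f,[k]}`, i.e. those satisfying
`SBase` and maximal under inclusion subject to it. -/
def Sk (f : ℕ → ℕ) (k : ℕ) : Set (Set (List ℕ)) :=
  {s | SBase f k s ∧ ∀ s', SBase f k s' → s ⊆ s' → s' = s}

/-- `𝒮_f = ⋃_{k ≥ 1} 𝒮_{f,k}`. -/
def Sf (f : ℕ → ℕ) : Set (Set (List ℕ)) := {s | ∃ k, 1 ≤ k ∧ s ∈ Sk f k}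

/-- The restriction `η ↾ k = ⟨η 0, …, η (k-1)⟩` of `η : ℕ → ℕ`. -/
def restr (η : ℕ → ℕ) (k : ℕ) : List ℕ := List.map η (List.range k)

/-- `lim(𝒯_f)` : branches of `𝒯_f`. -/
def limT (f : ℕ → ℕ) : Set (ℕ → ℕ) := {η | ∀ k, restr η k ∈ Tk f k}

/-- `lim(𝒮_f)` : sequences `⟨s_k : 1 ≤ k < ω⟩` with `s_k ∈ 𝒮_{f,k}`,
increasing under inclusion (the value at `0` is irrelevant). -/
def limS (f : ℕ → ℕ) : Set (ℕ → Set (List ℕ)) :=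
  {ν | (∀ k, 1 ≤ k → ν k ∈ Sk f k) ∧ ∀ k k', 1 ≤ k → k < k' → ν k ⊆ ν k'}

universe u

/-- An interpretation of the vocabulary
`τ = {P, Q, R, P_η (η ∈ 𝒯_f), Q_s (s ∈ 𝒮_f)}` on a domain `M`.
(The values of `Pn`/`Qs` off `𝒯_f`/`𝒮_f` are irrelevant.) -/
structure T0Str (M : Type u) where
  P : Set M
  Q : Set M
  Pn : List ℕ → Set M
  Qs : Set (List ℕ) → Set M
  R : M → M → Prop

/-- `S` is a model of the universal theory `T_{0,f}` (Definition 2.3). -/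
def IsModelT0 (f : ℕ → ℕ) {M : Type u} (S : T0Str M) : Prop :=
  -- (a) P, Q partition M
  (S.P ∪ S.Q = Set.univ ∧ Disjoint S.P S.Q) ∧
  -- (b) for each k, ⟨P_η : η ∈ 𝒯_{f,k}⟩ partitions P
  (∀ k, (⋃ η ∈ Tk f k, S.Pn η) = S.P ∧
    ∀ η ∈ Tk f k, ∀ η' ∈ Tk f k, η ≠ η' → Disjoint (S.Pn η) (S.Pn η')) ∧
  -- (c) for each k ≥ 1, ⟨Q_s : s ∈ 𝒮_{f,k}⟩ partitions Q
  (∀ k, 1 ≤ k → (⋃ s ∈ Sk f k, S.Qs s) = S.Q ∧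
    ∀ s ∈ Sk f k, ∀ s' ∈ Sk f k, s ≠ s' → Disjoint (S.Qs s) (S.Qs s')) ∧
  -- (d) monotonicity
  (∀ η ∈ Tf f, ∀ η' ∈ Tf f, η <+: η' → S.Pn η' ⊆ S.Pn η) ∧
  (∀ s ∈ Sf f, ∀ s' ∈ Sf f, s ⊆ s' → S.Qs s' ⊆ S.Qs s) ∧
  -- (e) R ⊆ Q × P
  (∀ b a, S.R b a → b ∈ S.Q ∧ a ∈ S.P) ∧
  -- (e) no element of Q connects into every piece of a successor partition
  (∀ k, ∀ η ∈ Tk f k, ∀ bv : ℕ → M,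
    (∀ ℓ ≤ f k, bv ℓ ∈ S.Pn (η ++ [ℓ])) →
      ¬ ∃ x ∈ S.Q, ∀ ℓ ≤ f k, S.R x (bv ℓ)) ∧
  -- (e) edges from Q_s go only into P_η with η ∈ s
  (∀ b a, S.R b a → ∀ k, 1 ≤ k → ∀ s ∈ Sk f k, b ∈ S.Qs s →
    ∀ η ∈ Tk f k, a ∈ S.Pn η → η ∈ s)

/-- An embedding of `τ`-structures: injective and preserving all atomic
formulas in both directions. -/
def IsEmb (f : ℕ → ℕ) {A B : Type u} (SA : T0Str A) (SB : T0Str B)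
    (g : A → B) : Prop :=
  Function.Injective g ∧
  (∀ a, a ∈ SA.P ↔ g a ∈ SB.P) ∧
  (∀ a, a ∈ SA.Q ↔ g a ∈ SB.Q) ∧
  (∀ η ∈ Tf f, ∀ a, a ∈ SA.Pn η ↔ g a ∈ SB.Pn η) ∧
  (∀ s ∈ Sf f, ∀ a, a ∈ SA.Qs s ↔ g a ∈ SB.Qs s) ∧
  (∀ a b, SA.R a b ↔ SB.R (g a) (g b))

theorem inT_append_singleton {f : ℕ → ℕ} {η : List ℕ} {l : ℕ} :
    inT f (η ++ [l]) ↔ inT f η ∧ l ≤ f η.length := by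
  constructor
  · intro h
    refine ⟨fun i => ?_, ?_⟩
    · have := h ⟨i.1, by have := i.2; rw [List.length_append]; omega⟩
      simpa [List.getElem_append] using this
    · have := h ⟨η.length, by simp⟩
      simpa using this
  · rintro ⟨h1, h2⟩ ⟨i, hi⟩
    simp only [List.length_append, List.length_singleton] at hi
    rcases Nat.lt_or_ge i η.length with h | h
    · have := h1 ⟨i, h⟩
      simpa [List.getElem_append, h] using this
    · have : i = η.length := by omega
      subst this
      simpa using h2

theorem inT_prefix {f : ℕ → ℕ} {η ρ : List ℕ} (h : inT f η) (hp : ρ <+: η) : inT f ρ := by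
  obtain ⟨t, rfl⟩ := hp
  intro i
  have := h ⟨i.1, by have := i.2; rw [List.length_append]; omega⟩
  simpa [List.getElem_append] using this

/-- The subtree avoiding the successors chosen by `o`. -/
def avoidTree (f : ℕ → ℕ) (o : List ℕ → ℕ) : Set (List ℕ) :=
  {η | inT f η ∧ ∀ ρ l, ρ ++ [l] <+: η → l ≠ o ρ}

/-- Its levels up to `k`. -/
def avoidLevel (f : ℕ → ℕ) (o : List ℕ → ℕ) (k : ℕ) : Set (List ℕ) :=
  {η | η ∈ avoidTree f o ∧ η.length ≤ k}

theorem avoid_append {f : ℕ → ℕ} {o : List ℕ → ℕ} {η : List ℕ} {l : ℕ} :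
    η ++ [l] ∈ avoidTree f o ↔ η ∈ avoidTree f o ∧ l ≤ f η.length ∧ l ≠ o η := by
  constructor
  · rintro ⟨h1, h2⟩
    rw [inT_append_singleton] at h1
    exact ⟨⟨h1.1, fun ρ m hp => h2 ρ m (hp.trans (List.prefix_append _ _))⟩, h1.2,
      h2 η l (List.prefix_refl _)⟩
  · rintro ⟨⟨h1, h2⟩, h3, h4⟩
    refine ⟨inT_append_singleton.2 ⟨h1, h3⟩, fun ρ m hp => ?_⟩
    rw [List.prefix_concat_iff] at hp
    rcases hp with hp | hp
    · obtain ⟨rfl, hh⟩ := List.append_inj' hp rfl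
      simp only [List.cons.injEq, and_true] at hh
      subst hh
      exact h4
    · exact h2 ρ m hp

theorem avoid_SBase {f : ℕ → ℕ} (hf0 : ∀ k, 0 < f k) {o : List ℕ → ℕ}
    (ho : ∀ ρ, inT f ρ → o ρ ≤ f ρ.length) (k : ℕ) : SBase f k (avoidLevel f o k) := by
  refine ⟨fun η h => ⟨h.2, h.1.1⟩, ⟨[], ⟨?_, ?_⟩, by simp⟩, ?_, ?_, ?_⟩
  · intro i; exact i.elim0
  · intro ρ l h; simp at h
  · intro η h ρ hp
    exact ⟨⟨inT_prefix h.1.1 hp, fun σ m hq => h.1.2 σ m (hq.trans hp)⟩, hp.length_le.trans h.2⟩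
  · intro ρ h hmax
    by_contra hne
    have hlt : ρ.length < k := lt_of_le_of_ne h.2 hne
    obtain ⟨l, hl, hlo⟩ : ∃ l ≤ f ρ.length, l ≠ o ρ := by
      have := hf0 ρ.length
      by_cases h0 : o ρ = 0
      · exact ⟨1, this, by omega⟩
      · exact ⟨0, by omega, fun h => h0 h.symm⟩
    have hm := hmax (ρ ++ [l]) ⟨avoid_append.2 ⟨h.1, hl, hlo⟩, by simp; omega⟩
      (List.prefix_append _ _)
    simp at hm
  · intro ρ h hall
    exact (avoid_append.1 (hall (o ρ) (ho ρ h.2)).1).2.2 rfl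

theorem avoid_Sk {f : ℕ → ℕ} (hf0 : ∀ k, 0 < f k) {o : List ℕ → ℕ}
    (ho : ∀ ρ, inT f ρ → o ρ ≤ f ρ.length) (k : ℕ) : avoidLevel f o k ∈ Sk f k := by
  refine ⟨avoid_SBase hf0 ho k, fun s' hs' hsub => ?_⟩
  refine Set.Subset.antisymm ?_ hsub
  intro η
  induction η using List.reverseRecOn with
  | nil =>
    intro _
    obtain ⟨x, hx⟩ := (avoid_SBase hf0 ho k).2.1
    exact (avoid_SBase hf0 ho k).2.2.1 x hx [] List.nil_prefix
  | append_singleton ρ l ih =>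
    intro h
    have hρ := ih (hs'.2.2.1 _ h ρ (List.prefix_append _ _))
    obtain ⟨hlen, hT⟩ := hs'.1 h
    rw [inT_append_singleton] at hT
    refine ⟨avoid_append.2 ⟨hρ.1, hT.2, ?_⟩, hlen⟩
    intro hlo
    refine hs'.2.2.2.2 ρ ⟨hρ.2, hρ.1.1⟩ fun m hm => ?_
    by_cases hmo : m = l
    · rw [hmo]; exact h
    · refine hsub ⟨avoid_append.2 ⟨hρ.1, hm, fun h => hmo (h.trans hlo.symm)⟩, ?_⟩
      simpa using hlen

theorem Sk_sub_avoid {f : ℕ → ℕ} (hf0 : ∀ k, 0 < f k) {o : List ℕ → ℕ}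
    (ho : ∀ ρ, inT f ρ → o ρ ≤ f ρ.length) {k k' : ℕ} {s : Set (List ℕ)} (hs : s ∈ Sk f k)
    (hsub : s ⊆ avoidLevel f o k') : s = avoidLevel f o k := by
  exact (hs.2 _ (avoid_SBase hf0 ho k) fun η hη => ⟨(hsub hη).1, (hs.1.1 hη).1⟩).symm

/-- One-point extension by a new element of `Q`. -/
def extStr (f : ℕ → ℕ) {M : Type u} (SM : T0Str M) (o : List ℕ → ℕ) (A : Set M) :
    T0Str (Option M) where
  P := {x | x.elim False (· ∈ SM.P)}
  Q := {x | x.elim True (· ∈ SM.Q)}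
  Pn η := {x | x.elim False (· ∈ SM.Pn η)}
  Qs s := {x | x.elim (∃ k, 1 ≤ k ∧ s = avoidLevel f o k) (· ∈ SM.Qs s)}
  R x y := y.elim False fun m => x.elim (m ∈ A) (fun b => SM.R b m)

theorem ext_model {f : ℕ → ℕ} (hf0 : ∀ k, 0 < f k) {M : Type u} {SM : T0Str M}
    (hM : IsModelT0 f SM) {o : List ℕ → ℕ} (ho : ∀ ρ, inT f ρ → o ρ ≤ f ρ.length)
    {A : Set M} (hA : A ⊆ SM.P) (hoA : ∀ ρ, inT f ρ → ∀ m ∈ A, m ∉ SM.Pn (ρ ++ [o ρ])) :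
    IsModelT0 f (extStr f SM o A) := by
  obtain ⟨⟨a1, a2⟩, b, c, d1, d2, e1, e2, e3⟩ := hM
  refine ⟨⟨?_, ?_⟩, ?_, ?_, ?_, ?_, ?_, ?_, ?_⟩
  · ext (_ | x)
    · simp [extStr]
    · have : x ∈ SM.P ∪ SM.Q := a1 ▸ Set.mem_univ x
      simpa [extStr] using this
  · rw [Set.disjoint_left]
    rintro (_ | x) h1 h2
    · exact h1
    · exact Set.disjoint_left.1 a2 h1 h2
  · intro k
    refine ⟨?_, ?_⟩
    · ext (_ | x)
      · simp [extStr]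
      · have := Set.ext_iff.1 (b k).1 x
        simpa [extStr] using this
    · intro η h η' h' hne
      rw [Set.disjoint_left]
      rintro (_ | x) h1 h2
      · exact h1
      · exact Set.disjoint_left.1 ((b k).2 η h η' h' hne) h1 h2
  · intro k hk
    refine ⟨?_, ?_⟩
    · ext (_ | x)
      · simp only [Set.mem_iUnion]
        exact ⟨fun _ => trivial, fun _ => ⟨_, avoid_Sk hf0 ho k, k, hk, rfl⟩⟩
      · have := Set.ext_iff.1 (c k hk).1 x
        simpa [extStr] using this
    · intro s h s' h' hne
      rw [Set.disjoint_left]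
      rintro (_ | x) h1 h2
      · obtain ⟨k1, _, r1⟩ := h1
        obtain ⟨k2, _, r2⟩ := h2
        exact hne ((Sk_sub_avoid hf0 ho h r1.subset).trans
          (Sk_sub_avoid hf0 ho h' r2.subset).symm)
      · exact Set.disjoint_left.1 ((c k hk).2 s h s' h' hne) h1 h2
  · rintro η h η' h' hp (_ | x) hx
    · exact hx
    · exact d1 η h η' h' hp hx
  · rintro s h s' h' hsub (_ | x) hx
    · obtain ⟨k, hk, hs⟩ := h
      obtain ⟨k', _, r⟩ := hx
      exact ⟨k, hk, Sk_sub_avoid hf0 ho hs (hsub.trans r.subset)⟩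
    · exact d2 s h s' h' hsub hx
  · rintro (_ | x) (_ | y) h
    · exact h.elim
    · exact ⟨trivial, hA h⟩
    · exact h.elim
    · exact e1 x y h
  · rintro k η hη bv hbv ⟨x, hx, hR⟩
    have hlen : o η ≤ f k := by have := ho η hη.2; rwa [hη.1] at this
    rcases x with _ | x
    · have h1 := hbv _ hlen
      have h2 := hR _ hlen
      generalize bv (o η) = y at h1 h2
      rcases y with _ | y
      · exact h1
      · exact hoA η hη.2 y h2 h1
    · refine e2 k η hη (fun l => (bv l).getD x) (fun l hl => ?_) ⟨x, hx, fun l hl => ?_⟩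
      · have h1 := hbv l hl
        rcases hy : bv l with _ | y
        · rw [hy] at h1; exact h1.elim
        · rw [hy] at h1; simp only [hy, Option.getD_some]; exact h1
      · have h1 := hR l hl
        rcases hy : bv l with _ | y
        · rw [hy] at h1; exact h1.elim
        · rw [hy] at h1; simp only [hy, Option.getD_some]; exact h1
  · rintro (_ | x) (_ | y) h k hk s hs hb η hη hy
    · exact h.elim
    · obtain ⟨k', _, r⟩ := hb
      rw [Sk_sub_avoid hf0 ho hs r.subset]
      refine ⟨⟨hη.2, ?_⟩, hη.1.le⟩
      rintro ρ l hp rfl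
      have hT := inT_prefix hη.2 hp
      exact hoA ρ (inT_append_singleton.1 hT).1 y h (d1 _ hT _ hη.2 hp hy)
    · exact h.elim
    · exact e3 x y h k hk s hs hb η hη hy

/-- **Case (a) of quantifier elimination (Claim 2.5)**, as a one-point
extension criterion.  Let `M ⊨ T_{0,f}`, `a_0, …, a_n ∈ P^M`, and `k*`
minimal with `f(k*) > n`.  Then the following are equivalent:
(i) in some extension `N ⊨ T_{0,f}` of `M` there is `b ∈ Q^N` with
`R^N(b, a_i)` for all `i ≤ n`;
(ii) for every `j < k*` and every `η ∈ 𝒯_{f,j}` there is `ℓ ≤ f(j)` such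
that no `a_i` lies in `P^M_{η⌢⟨ℓ⟩}`. -/
theorem qe_case_a
    (f : ℕ → ℕ) (hf : StrictMono f) (hf0 : ∀ k, 0 < f k)
    (M : Type u) (SM : T0Str M) (hM : IsModelT0 f SM)
    (n : ℕ) (a : ℕ → M) (ha : ∀ i ≤ n, a i ∈ SM.P)
    (kstar : ℕ) (hk1 : n < f kstar) (hk2 : ∀ j < kstar, f j ≤ n) :
    (∃ (N : Type u) (SN : T0Str N) (ι : M → N),
        IsModelT0 f SN ∧ IsEmb f SM SN ι ∧
        ∃ b ∈ SN.Q, ∀ i ≤ n, SN.R b (ι (a i))) ↔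
    (∀ j < kstar, ∀ η ∈ Tk f j, ∃ ℓ ≤ f j,
        ∀ i ≤ n, a i ∉ SM.Pn (η ++ [ℓ])) := by
  constructor
  · rintro ⟨N, SN, ι, hN, hE, b, hb, hR⟩ j hj η hη
    by_contra hcon
    push Not at hcon
    choose g hg1 hg2 using hcon
    obtain ⟨-, -, -, -, -, -, e2, -⟩ := hN
    refine e2 j η hη (fun l => if h : l ≤ f j then ι (a (g l h)) else b) (fun l hl => ?_)
      ⟨b, hb, fun l hl => ?_⟩
    · simp only [hl, dif_pos]
      refine (hE.2.2.2.1 _ ?_ _).1 (hg2 l hl)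
      exact inT_append_singleton.2 ⟨hη.2, by rw [hη.1]; exact hl⟩
    · simp only [hl, dif_pos]
      exact hR _ (hg1 l hl)
  · intro h
    have key : ∀ ρ, ∃ l, inT f ρ → l ≤ f ρ.length ∧ ∀ i ≤ n, a i ∉ SM.Pn (ρ ++ [l]) := by
      intro ρ
      by_cases hρ : inT f ρ
      swap
      · exact ⟨0, fun h => (hρ h).elim⟩
      rcases Nat.lt_or_ge ρ.length kstar with hlt | hge
      · obtain ⟨l, h1, h2⟩ := h _ hlt ρ ⟨rfl, hρ⟩
        exact ⟨l, fun _ => ⟨h1, h2⟩⟩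
      · by_contra hcon
        have hcon' : ∀ l ≤ f ρ.length, ∃ i ≤ n, a i ∈ SM.Pn (ρ ++ [l]) := by
          intro l hl
          by_contra hc
          push Not at hc
          exact hcon ⟨l, fun _ => ⟨hl, hc⟩⟩
        choose! g hg1 hg2 using hcon'
        have hn : n < f ρ.length := lt_of_lt_of_le hk1 (hf.monotone hge)
        obtain ⟨x, hx, y, hy, hne, hxy⟩ := Finset.exists_ne_map_eq_of_card_lt_of_maps_to
          (s := Finset.range (f ρ.length + 1)) (t := Finset.range (n + 1)) (f := g)
          (by simpa using hn)
          (fun l hl => by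
            simp only [Finset.coe_range, Set.mem_Iio] at hl ⊢
            have := hg1 l (by omega)
            omega)
        simp only [Finset.mem_range] at hx hy
        have hx1 : x ≤ f ρ.length := by omega
        have hy1 : y ≤ f ρ.length := by omega
        have hdis := (hM.2.1 (ρ.length + 1)).2 (ρ ++ [x])
          ⟨by simp, inT_append_singleton.2 ⟨hρ, hx1⟩⟩ (ρ ++ [y])
          ⟨by simp, inT_append_singleton.2 ⟨hρ, hy1⟩⟩ (by simpa using hne)
        exact Set.disjoint_left.1 hdis (hg2 x hx1) (hxy ▸ hg2 y hy1)
    choose o ho using key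
    refine ⟨Option M, extStr f SM o {m | ∃ i ≤ n, a i = m}, some, ?_, ?_, none, trivial, ?_⟩
    · refine ext_model hf0 hM (fun ρ hρ => (ho ρ hρ).1) ?_ ?_
      · rintro m ⟨i, hi, rfl⟩
        exact ha i hi
      · rintro ρ hρ m ⟨i, hi, rfl⟩
        exact (ho ρ hρ).2 i hi
    · exact ⟨Option.some_injective M, fun _ => Iff.rfl, fun _ => Iff.rfl, fun _ _ _ => Iff.rfl,
        fun _ _ _ => Iff.rfl, fun _ _ => Iff.rfl⟩
    · intro i hi
      exact ⟨i, hi, rfl⟩
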